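/- Let F and G be cdfs on ℝ having the same set of atoms, and let Y be a real-valued random variable with cdf G. Then for every u ∈ (0,1), E[(J_G(Y,u) − J_F(Y,u))²] ≤ 3·sup_{y∈ℝ} |G(y) − F(y)|. -/

import Mathlib

/-!
For a cdf `G` and `V` uniform on `(0,1)`, `J_G(y,t) = P(G(y-) + V ΔG(y) ≤ t)`. Put
`ε = sup |G - F|`. Both values and left limits of `F` and `G` differ by at most `ε`, so
`J_G(y,u-ε) ≤ J_F(y,u) ≤ J_G(y,u+ε)` pointwise (`JG_le_JG_add`; the hypothesis on the atoms
rules out comparing the two branches of the definition of `J`). As `J` is monotone in its second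
argument and takes values in `[0,1]`,
`(J_G(y,u) - J_F(y,u))² ≤ |J_G(y,u) - J_F(y,u)| ≤ J_G(y,u+ε) - J_G(y,u-ε)`.
The distributional transform `G(Y-) + V ΔG(Y)` is uniform, that is `E[J_G(Y,t)] = D(t)`
(`integral_JG`), and `D` is 1-Lipschitz, so the expectation is at most `2ε ≤ 3ε`.
-/

open MeasureTheory ProbabilityTheory Filter Set

noncomputable section

/-- `D(u) = min(1, max(0,u))`, the cdf of the uniform distribution on `(0,1)`. -/
def unifD (u : ℝ) : ℝ := min 1 (max 0 u)

/-- The jump `ΔG(x) = G(x) - G(x-)` of a function `G` at `x`. -/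
def jump (G : ℝ → ℝ) (x : ℝ) : ℝ := G x - Function.leftLim G x

/-- `J_G(x,u)`. -/
def JG (G : ℝ → ℝ) (x u : ℝ) : ℝ :=
  if 0 < jump G x then unifD ((u - Function.leftLim G x) / jump G x)
  else if G x ≤ u then 1 else 0

/-- Generalized inverse `F⁻¹(u) = inf {x : F(x) ≥ u}`. -/
def Ginv (F : ℝ → ℝ) (u : ℝ) : ℝ := sInf {x : ℝ | u ≤ F x}

/-- `F` is a cumulative distribution function on `ℝ`. -/
structure IsCDF (F : ℝ → ℝ) : Prop where
  mono : Monotone F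
  right_cont : ∀ x, ContinuousWithinAt F (Set.Ici x) x
  tendsto_atBot : Filter.Tendsto F Filter.atBot (nhds 0)
  tendsto_atTop : Filter.Tendsto F Filter.atTop (nhds 1)

lemma unifD_nonneg (x : ℝ) : 0 ≤ unifD x := by
  unfold unifD; exact le_min zero_le_one (le_max_left _ _)

lemma unifD_le_one (x : ℝ) : unifD x ≤ 1 := min_le_left _ _

lemma unifD_mono : Monotone unifD := fun _ _ h =>
  min_le_min le_rfl (max_le_max le_rfl h)

lemma unifD_of_nonpos {x : ℝ} (h : x ≤ 0) : unifD x = 0 := by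
  simp [unifD, max_eq_left h]

lemma unifD_of_one_le {x : ℝ} (h : 1 ≤ x) : unifD x = 1 := by
  simp [unifD, h]

lemma unifD_of_mem {x : ℝ} (h0 : 0 ≤ x) (h1 : x ≤ 1) : unifD x = x := by
  simp [unifD, h0, h1]

lemma unifD_sub_le {ε : ℝ} (hε : 0 ≤ ε) (u : ℝ) : unifD (u + ε) - unifD (u - ε) ≤ 2 * ε := by
  unfold unifD
  grind

lemma JG_nonneg (G : ℝ → ℝ) (x u : ℝ) : 0 ≤ JG G x u := by
  unfold JG; split_ifs <;> simp [unifD_nonneg]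

lemma JG_le_one (G : ℝ → ℝ) (x u : ℝ) : JG G x u ≤ 1 := by
  unfold JG; split_ifs <;> simp [unifD_le_one]

lemma JG_eq_one {G : ℝ → ℝ} {x u : ℝ} (h : G x ≤ u) : JG G x u = 1 := by
  unfold JG
  split_ifs with h1
  · apply unifD_of_one_le
    rw [one_le_div h1]
    unfold jump; linarith
  · rfl

lemma JG_eq_zero {G : ℝ → ℝ} {x u : ℝ} (h : u ≤ Function.leftLim G x) (h' : u < G x) :
    JG G x u = 0 := by
  unfold JG
  split_ifs with h1 h2
  · exact unifD_of_nonpos (div_nonpos_of_nonpos_of_nonneg (by linarith) h1.le)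
  · linarith
  · rfl

/-- If the interval `[G(y-), G(y)]` lies at most `ε` above `[F(y-), F(y)]` endpoint by endpoint,
then `J_F(y,u) ≤ J_G(y,u+ε)`. -/
lemma JG_le_JG_add {F G : ℝ → ℝ} {y ε : ℝ} (hat : 0 < jump F y ↔ 0 < jump G y)
    (hl : Function.leftLim G y ≤ Function.leftLim F y + ε) (hr : G y ≤ F y + ε) (u : ℝ) :
    JG F y u ≤ JG G y (u + ε) := by
  by_cases hb : G y ≤ u + ε
  · rw [JG_eq_one hb]; exact JG_le_one _ _ _
  push Not at hb
  by_cases ha : u ≤ Function.leftLim F y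
  · rw [JG_eq_zero ha (by linarith)]; exact JG_nonneg _ _ _
  push Not at ha
  by_cases hj : 0 < jump F y
  · have hj' := hat.1 hj
    unfold JG
    rw [if_pos hj, if_pos hj']
    apply unifD_mono
    rw [div_le_div_iff₀ hj hj']
    unfold jump at *
    nlinarith [mul_nonneg (sub_nonneg.2 ha.le) (sub_nonneg.2 hr),
      mul_nonneg (by linarith : 0 ≤ F y - u) (sub_nonneg.2 hl)]
  · unfold JG
    rw [if_neg hj, if_neg (hat.not.1 hj), if_neg (by linarith), if_neg (by linarith)]

/-- If `S` has a maximum `m`, then `S ⊆ Iic m`; otherwise every point of `S` lies below a rational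
`q` with `ν (Iic q) = 0`. -/
lemma measure_null_of_Iic_null (ν : Measure ℝ) (S : Set ℝ) (h : ∀ y ∈ S, ν (Iic y) = 0) :
    ν S = 0 := by
  by_cases hmax : ∃ m ∈ S, ∀ y ∈ S, y ≤ m
  · obtain ⟨m, hm, hm'⟩ := hmax
    exact measure_mono_null hm' (h m hm)
  · push Not at hmax
    have hsub : S ⊆ ⋃ q : {q : ℚ // ν (Iic (q : ℝ)) = 0}, Iic ((q : ℚ) : ℝ) := by
      intro y hy
      obtain ⟨z, hz, hyz⟩ := hmax y hy
      obtain ⟨q, hq1, hq2⟩ := exists_rat_btwn hyz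
      exact mem_iUnion.2 ⟨⟨q, measure_mono_null (Iic_subset_Iic.2 hq2.le) (h z hz)⟩, hq1.le⟩
    exact measure_mono_null hsub (measure_iUnion_null fun q => q.2)

section CDF

variable (μ : Measure ℝ)

lemma leftLim_cdf [IsProbabilityMeasure μ] (x : ℝ) : Function.leftLim (cdf μ) x = μ.real (Iio x) := by
  have h := StieltjesFunction.measure_Iio (cdf μ) (tendsto_cdf_atBot μ) x
  rw [measure_cdf, sub_zero] at h
  have h0 : 0 ≤ Function.leftLim (cdf μ) x :=
    (cdf_nonneg μ (x - 1)).trans ((monotone_cdf μ).le_leftLim (by linarith))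
  rw [measureReal_def, h, ENNReal.toReal_ofReal h0]

lemma jump_cdf [IsProbabilityMeasure μ] (x : ℝ) : jump (cdf μ) x = μ.real {x} := by
  have h := StieltjesFunction.measure_singleton (cdf μ) x
  rw [measure_cdf] at h
  have h0 : 0 ≤ cdf μ x - Function.leftLim (cdf μ) x :=
    sub_nonneg.2 ((monotone_cdf μ).leftLim_le le_rfl)
  rw [measureReal_def, h, ENNReal.toReal_ofReal h0, jump]

/-- The quantile: a point `x` whose jump interval `[G(x-), G(x)]` contains `t`. -/
lemma exists_quantile {t : ℝ} (h0 : 0 < t) (h1 : t < 1) :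
    ∃ x, Function.leftLim (cdf μ) x ≤ t ∧ t ≤ cdf μ x := by
  set S := {y : ℝ | t ≤ cdf μ y} with hS
  have hne : S.Nonempty :=
    ((tendsto_cdf_atTop μ).eventually (eventually_ge_nhds h1)).exists
  have hbdd : BddBelow S := by
    obtain ⟨b, hb⟩ := ((tendsto_cdf_atBot μ).eventually (eventually_lt_nhds h0)).exists
    refine ⟨b, fun y hy => ?_⟩
    by_contra hlt
    push Not at hlt
    exact absurd (hy.trans (monotone_cdf μ hlt.le)) (not_le.2 hb)
  refine ⟨sInf S, ?_, ?_⟩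
  · refine le_of_tendsto ((monotone_cdf μ).tendsto_leftLim (sInf S)) ?_
    filter_upwards [self_mem_nhdsWithin] with y hy
    by_contra hlt
    push Not at hlt
    exact absurd (csInf_le hbdd (show y ∈ S from hlt.le)) (not_le.2 hy)
  · have hc : Tendsto (cdf μ) (nhdsWithin (sInf S) (Ioi (sInf S))) (nhds (cdf μ (sInf S))) :=
      ((cdf μ).right_continuous (sInf S)).mono Ioi_subset_Ici_self
    refine ge_of_tendsto hc ?_
    filter_upwards [self_mem_nhdsWithin] with y hy
    obtain ⟨z, hz, hzy⟩ := exists_lt_of_csInf_lt hne hy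
    exact le_trans hz (monotone_cdf μ hzy.le)

/-- The distributional transform is uniform: `E[J_G(Y,t)] = D(t)` when `Y` has cdf `G`. -/
lemma integral_JG [IsProbabilityMeasure μ] (t : ℝ) :
    Integrable (fun y => JG (cdf μ) y t) μ ∧ ∫ y, JG (cdf μ) y t ∂μ = unifD t := by
  have hmono := monotone_cdf μ
  rcases le_or_gt t 0 with h0 | h0
  · have hae : (fun y => JG (cdf μ) y t) =ᵐ[μ] fun _ => (0 : ℝ) := by
      have hnull : μ {y | cdf μ y ≤ t} = 0 := by
        apply measure_null_of_Iic_null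
        intro y hy
        have : cdf μ y = 0 := le_antisymm (le_trans hy h0) (cdf_nonneg μ y)
        rw [cdf_eq_real] at this
        exact (measureReal_eq_zero_iff).1 this
      filter_upwards [compl_mem_ae_iff.2 hnull] with y hy
      refine JG_eq_zero ?_ (not_le.1 hy)
      rw [leftLim_cdf]
      exact h0.trans measureReal_nonneg
    exact ⟨(integrable_congr hae).2 (integrable_const _), by
      rw [integral_congr_ae hae, unifD_of_nonpos h0]; simp⟩
  rcases le_or_gt 1 t with h1 | h1
  · have heq : (fun y => JG (cdf μ) y t) = fun _ => (1 : ℝ) := by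
      funext y
      exact JG_eq_one ((cdf_le_one μ y).trans h1)
    rw [heq, unifD_of_one_le h1]
    exact ⟨integrable_const _, by simp⟩
  obtain ⟨x, hx1, hx2⟩ := exists_quantile μ h0 h1
  set c := JG (cdf μ) x t with hc
  have hae : (fun y => JG (cdf μ) y t) =ᵐ[μ]
      fun y => (Iio x).indicator (fun _ => (1 : ℝ)) y + ({x} : Set ℝ).indicator (fun _ => c) y := by
    -- `G` is constant on `(x, y]` when `G y ≤ t ≤ G x`, so such `y > x` form a null set.
    have hnull : μ ({y | cdf μ y ≤ t} ∩ Ioi x) = 0 := by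
      rw [← Measure.restrict_apply' measurableSet_Ioi]
      apply measure_null_of_Iic_null
      intro y hy
      rw [Measure.restrict_apply measurableSet_Iic, Iic_inter_Ioi]
      have h := StieltjesFunction.measure_Ioc (cdf μ) x y
      rw [measure_cdf] at h
      rw [h, ENNReal.ofReal_eq_zero]
      have : cdf μ y ≤ t := hy
      linarith
    filter_upwards [compl_mem_ae_iff.2 hnull] with y hy
    rcases lt_trichotomy y x with h | h | h
    · have : JG (cdf μ) y t = 1 := JG_eq_one ((hmono.le_leftLim h).trans hx1)
      simp [this, h, h.ne]
    · subst h; simp [hc]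
    · have hy' : t < cdf μ y := by
        by_contra hcon
        exact hy ⟨not_lt.1 hcon, h⟩
      have : JG (cdf μ) y t = 0 := JG_eq_zero (hx2.trans (hmono.le_leftLim h)) hy'
      simp [this, h.le, h.ne']
  have hi1 : Integrable ((Iio x).indicator (fun _ => (1 : ℝ))) μ :=
    (integrable_const _).indicator measurableSet_Iio
  have hi2 : Integrable (({x} : Set ℝ).indicator (fun _ => c)) μ :=
    (integrable_const _).indicator (measurableSet_singleton x)
  refine ⟨(integrable_congr hae).2 (hi1.add hi2), ?_⟩
  rw [integral_congr_ae hae, integral_add hi1 hi2,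
    integral_indicator_const _ measurableSet_Iio,
    integral_indicator_const _ (measurableSet_singleton x), ← leftLim_cdf, ← jump_cdf,
    unifD_of_mem h0.le h1.le, smul_eq_mul, smul_eq_mul, mul_one, hc]
  have hj0 : 0 ≤ jump (cdf μ) x := sub_nonneg.2 (hmono.leftLim_le le_rfl)
  rcases hj0.eq_or_lt with hj | hj
  · rw [← hj, zero_mul]
    unfold jump at hj
    linarith
  · unfold JG
    rw [if_pos hj, unifD_of_mem, mul_div_cancel₀ _ hj.ne']
    · ring
    · exact div_nonneg (by linarith) hj.le
    · rw [div_le_one hj]; unfold jump; linarith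

end CDF

/-- If `F` and `G` are cdfs with the same set of atoms and `Y ~ G`, then for every
`u ∈ (0,1)`, `E[(J_G(Y,u) - J_F(Y,u))²] ≤ 3·sup_y |G(y) - F(y)|`. -/
theorem stmt7 (μ : Measure ℝ) [IsProbabilityMeasure μ]
    (G : ℝ → ℝ) (hG : ∀ x, G x = (μ (Set.Iic x)).toReal)
    (F : ℝ → ℝ) (hF : IsCDF F)
    (hAtoms : {x : ℝ | 0 < jump F x} = {x : ℝ | 0 < jump G x}) :
    ∀ u ∈ Set.Ioo (0:ℝ) 1,
      (∫ y, (JG G y u - JG F y u) ^ 2 ∂μ) ≤ 3 * ⨆ y : ℝ, |G y - F y| := by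
  intro u _
  obtain rfl : G = cdf μ := by
    funext x
    rw [hG, cdf_eq_real, measureReal_def]
  set ε := ⨆ y : ℝ, |cdf μ y - F y| with hε
  have hbdd : BddAbove (range fun y : ℝ => |cdf μ y - F y|) := by
    refine ⟨1, ?_⟩
    rintro _ ⟨y, rfl⟩
    have h1 := hF.mono.le_of_tendsto hF.tendsto_atBot y
    have h2 := hF.mono.ge_of_tendsto hF.tendsto_atTop y
    have h3 := cdf_nonneg μ y
    have h4 := cdf_le_one μ y
    exact abs_le.2 ⟨by linarith, by linarith⟩
  have hle : ∀ y, |cdf μ y - F y| ≤ ε := fun y => le_ciSup hbdd y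
  have hε0 : 0 ≤ ε := (abs_nonneg _).trans (hle 0)
  have hlim : ∀ y, |Function.leftLim (cdf μ) y - Function.leftLim F y| ≤ ε := fun y =>
    le_of_tendsto
      (((monotone_cdf μ).tendsto_leftLim y).sub (hF.mono.tendsto_leftLim y)).abs
      (Eventually.of_forall hle)
  have hat : ∀ y, 0 < jump F y ↔ 0 < jump (cdf μ) y := fun y => Set.ext_iff.1 hAtoms y
  have hpt : ∀ y, (JG (cdf μ) y u - JG F y u) ^ 2
      ≤ JG (cdf μ) y (u + ε) - JG (cdf μ) y (u - ε) := by
    intro y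
    have hv := abs_le.1 (hle y)
    have hl := abs_le.1 (hlim y)
    have a1 : JG F y u ≤ JG (cdf μ) y (u + ε) :=
      JG_le_JG_add (hat y) (by linarith) (by linarith) u
    have a2 : JG (cdf μ) y (u - ε) ≤ JG F y u := by
      simpa using JG_le_JG_add (ε := ε) (hat y).symm (by linarith) (by linarith) (u - ε)
    have a3 : JG (cdf μ) y u ≤ JG (cdf μ) y (u + ε) :=
      JG_le_JG_add Iff.rfl (by linarith) (by linarith) u
    have a4 : JG (cdf μ) y (u - ε) ≤ JG (cdf μ) y u := by
      simpa using JG_le_JG_add (F := cdf μ) (G := cdf μ) (y := y) (ε := ε) Iff.rfl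
        (by linarith) (by linarith) (u - ε)
    have b1 := JG_nonneg (cdf μ) y u
    have b2 := JG_le_one (cdf μ) y u
    have b3 := JG_nonneg F y u
    have b4 := JG_le_one F y u
    have c1 : |JG (cdf μ) y u - JG F y u| ≤ 1 := abs_le.2 ⟨by linarith, by linarith⟩
    have c2 : |JG (cdf μ) y u - JG F y u| ≤ JG (cdf μ) y (u + ε) - JG (cdf μ) y (u - ε) :=
      abs_le.2 ⟨by linarith, by linarith⟩
    rw [← sq_abs]
    nlinarith [abs_nonneg (JG (cdf μ) y u - JG F y u)]
  obtain ⟨i1, e1⟩ := integral_JG μ (u + ε)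
  obtain ⟨i2, e2⟩ := integral_JG μ (u - ε)
  calc ∫ y, (JG (cdf μ) y u - JG F y u) ^ 2 ∂μ
      ≤ ∫ y, (JG (cdf μ) y (u + ε) - JG (cdf μ) y (u - ε)) ∂μ :=
        integral_mono_of_nonneg (Eventually.of_forall fun _ => sq_nonneg _) (i1.sub i2)
          (Eventually.of_forall hpt)
    _ = unifD (u + ε) - unifD (u - ε) := by rw [integral_sub i1 i2, e1, e2]
    _ ≤ 2 * ε := unifD_sub_le hε0 u
    _ ≤ 3 * ε := by linarith
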